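/- Let R = (R_n : n ∈ ℕ) be a computable sequence of subsets of ℕ that admits no computable R-cohesive set, and let Φ be a use-monotone Turing functional. Define D_0 := {τ : ∃x ∀ρ extending τ, the cardinality of dom Φ(ρ) is < x} and, for each n ∈ ℕ, D_{1,n} := {τ : for every ρ extending τ and every x, there exist ζ extending ρ and u, v > x with u, v ∈ dom Φ(ζ) and exactly one of u, v in R_n}. Then the set D_0 ∪ ⋃_{n ∈ ℕ} D_{1,n} of finite binary strings is dense. -/

import Mathlib

open MeasureTheory

/-- Finite binary strings. -/
abbrev BinStr := List Bool

/-- `σ` is a (finite) initial segment of `X ∈ 2^ℕ`. -/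
def IsInitSeg (σ : BinStr) (X : ℕ → Bool) : Prop :=
  ∀ i, i < σ.length → σ.getD i false = X i

/-- `A ⊆* B` : all but finitely many elements of `A` are in `B`. -/
def SubsetStar (A B : Set ℕ) : Prop := (A \ B).Finite

/-- `C` is cohesive for the sequence `R`. -/
def Cohesive (R : ℕ → Set ℕ) (C : Set ℕ) : Prop :=
  C.Infinite ∧ ∀ n, SubsetStar C (R n) ∨ SubsetStar C (R n)ᶜ

/-- A set of naturals is computable if its characteristic function is computable. -/
def ComputableSet (A : Set ℕ) : Prop :=
  ∃ f : ℕ → Bool, Computable f ∧ ∀ n, n ∈ A ↔ f n = true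

/-- A sequence of sets is computable if `{(n,x) : x ∈ R n}` is computable. -/
def ComputableSeq (R : ℕ → Set ℕ) : Prop :=
  ∃ f : ℕ → ℕ → Bool, Computable₂ f ∧ ∀ n x, x ∈ R n ↔ f n x = true

/-- A use-monotone Turing functional: a partial computable map from
(strings × ℕ) to ℕ whose domain is monotone along extension of strings. -/
structure TuringFunctional where
  Φ : BinStr × ℕ →. ℕ
  partrec : Partrec Φ
  mono : ∀ ⦃σ τ : BinStr⦄, σ <+: τ → ∀ x, (Φ (σ, x)).Dom → (Φ (τ, x)).Dom

/-- `dom Φ(σ)` for a finite string `σ`. -/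
def TuringFunctional.domStr (F : TuringFunctional) (σ : BinStr) : Set ℕ :=
  {x | (F.Φ (σ, x)).Dom}

/-- `dom Φ(X)` for `X ∈ 2^ℕ`: the union of `dom Φ(σ)` over initial segments `σ` of `X`. -/
def TuringFunctional.domF (F : TuringFunctional) (X : ℕ → Bool) : Set ℕ :=
  {x | ∃ σ, IsInitSeg σ X ∧ (F.Φ (σ, x)).Dom}

/-- `C ≤_T X` via a monotone partial computable functional with Boolean values. -/
def ReducibleToFun (C : Set ℕ) (X : ℕ → Bool) : Prop :=
  ∃ Ψ : BinStr × ℕ →. Bool,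
    Partrec Ψ ∧
    (∀ ⦃σ τ : BinStr⦄, σ <+: τ → ∀ x b, b ∈ Ψ (σ, x) → b ∈ Ψ (τ, x)) ∧
    (∀ x, ∃ σ, IsInitSeg σ X ∧ (Ψ (σ, x)).Dom) ∧
    (∀ σ x b, IsInitSeg σ X → b ∈ Ψ (σ, x) → (b = true ↔ x ∈ C))

/-- `S` is a `Σ⁰₃` set of binary strings. -/
def Sigma3 (S : Set BinStr) : Prop :=
  ∃ P : BinStr → ℕ → ℕ → ℕ → Bool,
    (Computable fun q : BinStr × ℕ × ℕ × ℕ => P q.1 q.2.1 q.2.2.1 q.2.2.2) ∧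
    ∀ σ, σ ∈ S ↔ ∃ a, ∀ b, ∃ c, P σ a b c = true

/-- `G ∈ 2^ℕ` is `3`-generic: it meets or strongly avoids every `Σ⁰₃` set of strings. -/
def ThreeGeneric (G : ℕ → Bool) : Prop :=
  ∀ S : Set BinStr, Sigma3 S →
    (∃ σ, IsInitSeg σ G ∧ σ ∈ S) ∨ (∃ σ, IsInitSeg σ G ∧ ∀ τ, σ <+: τ → τ ∉ S)

/-- Binary trees: sets of strings closed under initial segments. -/
def IsTree (T : Set BinStr) : Prop := ∀ σ ∈ T, ∀ τ, τ <+: σ → τ ∈ T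

/-- `[T]`, the set of infinite paths through `T`. -/
def paths (T : Set BinStr) : Set (ℕ → Bool) := {X | ∀ σ, IsInitSeg σ X → σ ∈ T}

/-- A computable set of binary strings. -/
def ComputableStrSet (T : Set BinStr) : Prop :=
  ∃ f : BinStr → Bool, Computable f ∧ ∀ σ, σ ∈ T ↔ f σ = true

/-- The fair-coin (uniform) product measure on Cantor space `ℕ → Bool`, realized as
the pushforward of Lebesgue measure on `[0,1)` under the binary-digit map. -/
noncomputable def fairCoin : Measure (ℕ → Bool) :=
  Measure.map (fun x : ℝ => fun n : ℕ => decide (⌊x * 2 ^ (n + 1)⌋ % 2 = 1))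
    (volume.restrict (Set.Ico (0 : ℝ) 1))

/-- The basic clopen set `[σ]` of all `X ∈ 2^ℕ` extending `σ`. -/
def cyl (σ : BinStr) : Set (ℕ → Bool) := {X | IsInitSeg σ X}

/-- A computably enumerable set of pairs `(n, σ)`. -/
def CEStrSet (W : Set (ℕ × BinStr)) : Prop :=
  ∃ f : ℕ × BinStr →. Unit, Partrec f ∧ ∀ p, p ∈ W ↔ (f p).Dom

/-- `X` is Martin-Löf random: it passes every Martin-Löf test. -/
def MLRandom (X : ℕ → Bool) : Prop :=
  ∀ W : Set (ℕ × BinStr), CEStrSet W →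
    (∀ n : ℕ, fairCoin (⋃ σ ∈ {σ | (n, σ) ∈ W}, cyl σ) ≤ 1 / 2 ^ n) →
    X ∉ ⋂ n : ℕ, ⋃ σ ∈ {σ | (n, σ) ∈ W}, cyl σ

/-- A uniformly computable enumeration of binary trees containing every computable
binary tree. -/
def TreeEnum (T : ℕ → Set BinStr) : Prop :=
  (∃ f : ℕ → BinStr → Bool, Computable₂ f ∧ ∀ e σ, σ ∈ T e ↔ f e σ = true) ∧
  (∀ e, IsTree (T e)) ∧
  (∀ S, IsTree S → ComputableStrSet S → ∃ e, T e = S)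

/-- The set `D_{e,0}` of strings forcing `dom Φ(G)` to be bounded. -/
def D0 (F : TuringFunctional) : Set BinStr :=
  {τ | ∃ x : ℕ, ∀ ρ, τ <+: ρ → (F.domStr ρ).encard < (x : ℕ∞)}

/-- The set `D_{e,1,n}` of strings forcing `dom Φ(G)` to be split by `R n`. -/
def D1 (R : ℕ → Set ℕ) (F : TuringFunctional) (n : ℕ) : Set BinStr :=
  {τ | ∀ ρ, τ <+: ρ → ∀ x : ℕ, ∃ ζ, ρ <+: ζ ∧ ∃ u v, x < u ∧ x < v ∧
    u ∈ F.domStr ζ ∧ v ∈ F.domStr ζ ∧ (u ∈ R n ↔ v ∉ R n)}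

/-!
Suppose no extension of `σ` lies in the given set. Then above every `τ` extending `σ` the
functional can still put arbitrarily large numbers into its domain, while for each `n` some
extension of `τ` fixes the `R n`-colour of almost all of them. Fixing the colour is a co-c.e.
property of a string, so the least string not yet refuted is a computable approximation that
stabilises. Iterating it yields computable strings `g s` that eventually extend, for each `n`, a
string fixing the `R n`-colour. Choosing increasing numbers `Y s` from the domains above `g s`
gives a computable `R`-cohesive set.
-/

section Computability

variable {α β : Type*} [Primcodable α] [Primcodable β]

theorem computablePred_forall_lt {q : α → ℕ → Bool} (hq : Computable₂ q) :
    ComputablePred fun x : α × ℕ => ∀ k < x.2, q x.1 k = true := by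
  refine ComputablePred.computable_iff.2
    ⟨fun x => Nat.rec true (fun k b => b && q x.1 k) x.2, ?_, ?_⟩
  · refine Computable.nat_rec (h := fun x y => y.2 && q x.1 y.1) Computable.snd
      (Computable.const true) ?_
    have hqx : Computable fun z : (α × ℕ) × ℕ × Bool => q z.1.1 z.2.1 :=
      hq.comp (Computable.fst.comp Computable.fst) (Computable.fst.comp Computable.snd)
    exact Primrec.and.to_comp.comp (Computable.snd.comp Computable.snd) hqx
  · ext ⟨a, n⟩
    induction n with
    | zero => simp
    | succ n ih => simp only [Nat.forall_lt_succ_right, ih, Bool.and_eq_true]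

theorem rePred_exists_of_computable {q : α → β → Bool} (hq : Computable₂ q) :
    REPred fun a => ∃ b, q a b = true := by
  let f : α → ℕ → Option Unit := fun a n => (Encodable.decode (α := β) n).bind fun b =>
    cond (q a b) (some ()) none
  have hf : Computable₂ f := Computable.option_bind (Computable.decode.comp Computable.snd)
    (Computable.cond (hq.comp (Computable.fst.comp Computable.fst) Computable.snd)
      (Computable.const _) (Computable.const _))
  refine (Partrec.rfindOpt hf).dom_re.of_eq fun a => Nat.rfindOpt_dom.trans ⟨?_, ?_⟩
  · rintro ⟨n, u, hu⟩
    obtain ⟨b, -, hb⟩ := Option.bind_eq_some_iff.1 hu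
    exact ⟨b, by cases hqb : q a b <;> simp_all⟩
  · rintro ⟨b, hb⟩
    exact ⟨Encodable.encode b, (), by simp [f, hb]⟩

theorem exists_computable_of_rePred {p : α → Prop} (hp : REPred p) :
    ∃ q : α → ℕ → Bool, Computable₂ q ∧ ∀ a, p a ↔ ∃ n, q a n = true := by
  obtain ⟨c, hc⟩ := Nat.Partrec.Code.exists_code.1 hp
  refine ⟨fun a n => (Nat.Partrec.Code.evaln n c (Encodable.encode a)).isSome, ?_, fun a => ?_⟩
  · exact Primrec.option_isSome.to_comp.comp (Nat.Partrec.Code.primrec_evaln.to_comp.comp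
      ((Computable.snd.pair (Computable.const c)).pair (Computable.encode.comp Computable.fst)))
  · have hdom : p a ↔ (c.eval (Encodable.encode a)).Dom := by simp [hc, Part.assert]
    simp only [hdom, Part.dom_iff_mem, Nat.Partrec.Code.evaln_complete, Option.isSome_iff_exists,
      Option.mem_def]
    exact exists_comm

theorem rePred_and {p q : α → Prop} (hp : REPred p) (hq : REPred q) :
    REPred fun a => p a ∧ q a :=
  (Partrec.bind hp (hq.comp Computable.fst).to₂).dom_re.of_eq fun a => by simp [Part.assert]

theorem rePred_exists {p : α × β → Prop} (hp : REPred p) : REPred fun a => ∃ b, p (a, b) := by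
  obtain ⟨q, hq, hpq⟩ := exists_computable_of_rePred hp
  have hq' : Computable₂ fun (a : α) (x : β × ℕ) => q (a, x.1) x.2 :=
    hq.comp (Computable.fst.pair (Computable.fst.comp Computable.snd))
      (Computable.snd.comp Computable.snd)
  exact (rePred_exists_of_computable hq').of_eq fun a => by simp only [hpq, Prod.exists]

theorem exists_computable_choice_of_rePred {p : α × ℕ → Prop} (hp : REPred p)
    (h : ∀ a, ∃ n, p (a, n)) :
    ∃ g : α → ℕ, Computable g ∧ ∀ a, p (a, g a) := by
  classical
  obtain ⟨q, hq, hpq⟩ := exists_computable_of_rePred hp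
  have hex : ∀ a, ∃ n : ℕ, q (a, n.unpair.1) n.unpair.2 = true := fun a => by
    obtain ⟨n, hn⟩ := h a
    obtain ⟨k, hk⟩ := (hpq _).1 hn
    exact ⟨Nat.pair n k, by simpa using hk⟩
  have hunpair : Computable fun x : α × ℕ => x.2.unpair := Computable.unpair.comp Computable.snd
  have hpred : ComputablePred fun x : α × ℕ => q (x.1, x.2.unpair.1) x.2.unpair.2 = true :=
    ComputablePred.computable_iff.2 ⟨_, hq.comp (Computable.fst.pair (Computable.fst.comp hunpair))
      (Computable.snd.comp hunpair), rfl⟩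
  exact ⟨fun a => (Nat.find (hex a)).unpair.1,
    Computable.fst.comp (Computable.unpair.comp (Computable.find hpred hex)),
    fun a => (hpq _).2 ⟨_, Nat.find_spec (hex a)⟩⟩

theorem computableSet_range_of_strictMono {Y : ℕ → ℕ} (hY : Computable Y) (hmono : StrictMono Y) :
    ComputableSet (Set.range Y) := by
  classical
  have hex : ∀ n, ∃ s, n ≤ Y s := fun n => ⟨n, hmono.le_apply⟩
  have hpred : ComputablePred fun x : ℕ × ℕ => x.1 ≤ Y x.2 := Computable.computablePred
    (Primrec.nat_le.decide.to_comp.comp Computable.fst (hY.comp Computable.snd))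
  refine ⟨fun n => Y (Nat.find (hex n)) == n,
    Primrec.beq.to_comp.comp (hY.comp (Computable.find hpred hex)) Computable.id, fun n => ?_⟩
  rw [beq_iff_eq]
  refine ⟨?_, fun h => ⟨_, h⟩⟩
  rintro ⟨s, rfl⟩
  exact le_antisymm (hmono.monotone (Nat.find_min' _ le_rfl)) (Nat.find_spec (hex (Y s)))

theorem exists_computable_strictMono_mem {V : ℕ → Set ℕ}
    (hV : REPred fun x : ℕ × ℕ => x.2 ∈ V x.1) (hinf : ∀ s, (V s).Infinite) :
    ∃ Y : ℕ → ℕ, Computable Y ∧ StrictMono Y ∧ ∀ s, Y s ∈ V s := by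
  have hlt : REPred fun x : (ℕ × ℕ) × ℕ => x.1.2 < x.2 := ComputablePred.to_re <|
    Computable.computablePred (Primrec.nat_lt.decide.to_comp.comp
      (Computable.snd.comp Computable.fst) Computable.snd)
  have hmem : REPred fun x : (ℕ × ℕ) × ℕ => x.2 ∈ V x.1.1 :=
    hV.comp ((Computable.fst.comp Computable.fst).pair Computable.snd)
  obtain ⟨next, hnext, hspec⟩ := exists_computable_choice_of_rePred (rePred_and hlt hmem)
    fun ⟨s, m⟩ => ((hinf s).exists_gt m).imp fun _ h => h.symm
  let Y : ℕ → ℕ := fun s => Nat.rec (next (0, 0)) (fun s y => next (s + 1, y)) s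
  refine ⟨Y, ?_, strictMono_nat_of_lt_succ fun s => (hspec (s + 1, Y s)).1, fun s => ?_⟩
  · exact Computable.nat_rec (h := fun _ x => next (x.1 + 1, x.2)) Computable.id
      (Computable.const _) (hnext.comp (((Computable.succ.comp
        (Computable.fst.comp Computable.snd)).pair (Computable.snd.comp Computable.snd)))).to₂
  · cases s with
    | zero => exact (hspec (0, 0)).2
    | succ s => exact (hspec (s + 1, Y s)).2

end Computability

section LimitApproximation

open Filter

-- The approximation at stage `s` is the least `n` that has not been refuted within `s` steps.
theorem exists_limitComputable_choice_of_rePred_not {α : Type*} [Primcodable α]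
    {p : α × ℕ → Prop} (hp : REPred fun x => ¬ p x) (h : ∀ a, ∃ n, p (a, n)) :
    ∃ g : α → ℕ → ℕ, Computable₂ g ∧ ∀ a, ∃ n, p (a, n) ∧ ∀ᶠ s in atTop, g a s = n := by
  classical
  obtain ⟨q, hq, hpq⟩ := exists_computable_of_rePred hp
  have hiff : ∀ x, p x ↔ ∀ k, (!q x k) = true := fun x => by
    simpa using (hpq x).not
  have hex : ∀ x : α × ℕ, ∃ n, ∀ k < x.2, (!q (x.1, n) k) = true := fun x =>
    (h x.1).imp fun n hn k _ => (hiff _).1 hn k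
  have hpred : ComputablePred fun x : (α × ℕ) × ℕ => ∀ k < x.1.2, (!q (x.1.1, x.2) k) = true := by
    obtain ⟨b, hb, hbq⟩ := ComputablePred.computable_iff.1
      (computablePred_forall_lt (Primrec.not.to_comp.comp hq).to₂)
    refine ComputablePred.computable_iff.2 ⟨fun x => b ((x.1.1, x.2), x.1.2), hb.comp
      (((Computable.fst.comp Computable.fst).pair Computable.snd).pair
        (Computable.snd.comp Computable.fst)), funext fun x => congrFun hbq ((x.1.1, x.2), x.1.2)⟩
  refine ⟨fun a s => Nat.find (hex (a, s)), Computable.find hpred hex, fun a => ?_⟩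
  refine ⟨Nat.find (h a), Nat.find_spec (h a), ?_⟩
  have hrefuted : ∀ᶠ s in atTop, ∀ m < Nat.find (h a), ∃ k < s, q (a, m) k = true := by
    refine (Set.finite_lt_nat _).eventually_all.2 fun m hm => ?_
    obtain ⟨k, hk⟩ := (hpq _).1 (Nat.find_min (h a) hm)
    exact (eventually_gt_atTop k).mono fun s hs => ⟨k, hs, hk⟩
  filter_upwards [hrefuted] with s hs
  refine (Nat.find_eq_iff _).2 ⟨fun k _ => (hiff _).1 (Nat.find_spec (h a)) k, fun m hm hall => ?_⟩
  obtain ⟨k, hks, hk⟩ := hs m hm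
  simpa [hk] using hall k hks

variable {α : Type*}

/-- Iterated concatenation at stage `s`: the block appended to the `i`-th string `τ` is
`w i τ s`, the stage-`s` guess at the extension of `τ` meeting the `i`-th requirement. -/
def stageChain (w : ℕ → List α → ℕ → List α) (s : ℕ) : ℕ → List α
  | 0 => []
  | i + 1 => stageChain w s i ++ w i (stageChain w s i) s

theorem computable₂_stageChain [Primcodable α] {w : ℕ → List α → ℕ → List α}
    (hw : Computable fun x : (ℕ × List α) × ℕ => w x.1.1 x.1.2 x.2) :
    Computable₂ (stageChain w) := by
  refine (Computable.nat_rec (f := Prod.snd) (g := fun _ => [])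
    (h := fun (x : ℕ × ℕ) (y : ℕ × List α) => y.2 ++ w y.1 y.2 x.1)
    Computable.snd (Computable.const []) ?_).of_eq ?_
  · exact Computable.list_append.comp (Computable.snd.comp Computable.snd)
      (hw.comp (Computable.snd.pair (Computable.fst.comp Computable.fst)))
  · rintro ⟨s, i⟩
    induction i with
    | zero => rfl
    | succ i ih => simp only [stageChain, ← ih]

theorem stageChain_prefix_of_le (w : ℕ → List α → ℕ → List α) (s : ℕ) {i j : ℕ} (hij : i ≤ j) :
    stageChain w s i <+: stageChain w s j := by
  induction j, hij using Nat.le_induction with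
  | base => exact List.prefix_rfl
  | succ j _ ih => exact ih.trans (List.prefix_append _ _)

theorem exists_eventually_stageChain_eq {w : ℕ → List α → ℕ → List α}
    (hw : ∀ i τ, ∃ v, ∀ᶠ s in atTop, w i τ s = v) (i : ℕ) :
    ∃ τ, ∀ᶠ s in atTop, stageChain w s i = τ := by
  induction i with
  | zero => exact ⟨[], Eventually.of_forall fun _ => rfl⟩
  | succ i ih =>
    obtain ⟨τ, hτ⟩ := ih
    obtain ⟨v, hv⟩ := hw i τ
    refine ⟨τ ++ v, ?_⟩
    filter_upwards [hτ, hv] with s hsτ hsv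
    rw [stageChain, hsτ, hsv]

theorem exists_computable_eventually_prefix_of_dense [Primcodable α] {good : ℕ → List α → Prop}
    (hgood : REPred fun x : ℕ × List α => ¬ good x.1 x.2)
    (hdense : ∀ i τ, ∃ ρ, τ <+: ρ ∧ good i ρ) :
    ∃ g : ℕ → List α, Computable g ∧ ∀ i, ∃ τ, good i τ ∧ ∀ᶠ s in atTop, τ <+: g s := by
  let word : ℕ → List α := fun n => (Encodable.decode n).getD []
  have hword : Computable word := Computable.option_getD Computable.decode (Computable.const [])
  have hre : REPred fun x : (ℕ × List α) × ℕ => ¬ good x.1.1 (x.1.2 ++ word x.2) :=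
    hgood.comp ((Computable.fst.comp Computable.fst).pair (Computable.list_append.comp
      (Computable.snd.comp Computable.fst) (hword.comp Computable.snd)))
  obtain ⟨c, hc, hlim⟩ := exists_limitComputable_choice_of_rePred_not hre fun ⟨i, τ⟩ => by
    obtain ⟨_, ⟨v, rfl⟩, hv⟩ := hdense i τ
    exact ⟨Encodable.encode v, by simpa [word] using hv⟩
  let w : ℕ → List α → ℕ → List α := fun i τ s => word (c (i, τ) s)
  have hwlim : ∀ i τ, ∃ v, good i (τ ++ v) ∧ ∀ᶠ s in atTop, w i τ s = v := fun i τ => by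
    obtain ⟨n, hn, hs⟩ := hlim (i, τ)
    exact ⟨word n, hn, hs.mono fun s h => congrArg word h⟩
  refine ⟨fun s => stageChain w s s, (computable₂_stageChain (hword.comp hc)).comp
    Computable.id Computable.id, fun i => ?_⟩
  obtain ⟨τ, hτ⟩ := exists_eventually_stageChain_eq (fun i τ => (hwlim i τ).imp fun _ h => h.2) i
  obtain ⟨v, hgood_v, hv⟩ := hwlim i τ
  refine ⟨τ ++ v, hgood_v, ?_⟩
  filter_upwards [hτ, hv, eventually_gt_atTop i] with s hsτ hsv his
  calc τ ++ v = stageChain w s (i + 1) := by rw [stageChain, hsτ, hsv]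
    _ <+: stageChain w s s := stageChain_prefix_of_le w s his

end LimitApproximation

section Cohesive

open Filter

theorem cohesive_range {R : ℕ → Set ℕ} {Y : ℕ → ℕ} (hY : Function.Injective Y)
    (h : ∀ n, (∀ᶠ s in atTop, Y s ∈ R n) ∨ ∀ᶠ s in atTop, Y s ∉ R n) :
    Cohesive R (Set.range Y) := by
  have hfinite : ∀ A : Set ℕ, (∀ᶠ s in atTop, Y s ∈ A) → SubsetStar (Set.range Y) A := by
    intro A hA
    rw [← Nat.cofinite_eq_atTop, eventually_cofinite] at hA
    refine (hA.image Y).subset ?_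
    rintro _ ⟨⟨s, rfl⟩, hs⟩
    exact ⟨s, hs, rfl⟩
  exact ⟨Set.infinite_range_of_injective hY, fun n => (h n).imp (hfinite _) (hfinite _)⟩

/-- `S` is homogeneous for the two-colouring `A, Aᶜ` of `ℕ`, ignoring the elements of `S` that
are at most `n`. -/
def HomogeneousAbove (A S : Set ℕ) (n : ℕ) : Prop :=
  ∀ u ∈ S, ∀ v ∈ S, n < u → n < v → (u ∈ A ↔ v ∈ A)

theorem HomogeneousAbove.mono {A S T : Set ℕ} {m n : ℕ} (h : HomogeneousAbove A S m) (hTS : T ⊆ S)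
    (hmn : m ≤ n) : HomogeneousAbove A T n := fun u hu v hv hnu hnv =>
  h u (hTS hu) v (hTS hv) (hmn.trans_lt hnu) (hmn.trans_lt hnv)

theorem HomogeneousAbove.eventually_mem_or_eventually_notMem {A S : Set ℕ} {n : ℕ}
    (h : HomogeneousAbove A S n) {Y : ℕ → ℕ} (hY : Tendsto Y atTop atTop)
    (hS : ∀ᶠ s in atTop, Y s ∈ S) :
    (∀ᶠ s in atTop, Y s ∈ A) ∨ ∀ᶠ s in atTop, Y s ∉ A := by
  have hev := hS.and (hY.eventually_gt_atTop n)
  obtain ⟨s₀, hs₀, hns₀⟩ := hev.exists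
  have hiff : ∀ᶠ s in atTop, (Y s ∈ A ↔ Y s₀ ∈ A) := hev.mono fun s hs =>
    h _ hs.1 _ hs₀ hs.2 hns₀
  by_cases hA : Y s₀ ∈ A
  · exact Or.inl (hiff.mono fun s hs => hs.2 hA)
  · exact Or.inr (hiff.mono fun s hs => mt hs.1 hA)

theorem rePred_not_homogeneousAbove {ι : Type*} [Primcodable ι] {V : ι → Set ℕ} {R : ℕ → Set ℕ}
    (hV : REPred fun x : ι × ℕ => x.2 ∈ V x.1) (hR : ComputableSeq R) :
    REPred fun x : (ℕ × ι) × ℕ => ¬ HomogeneousAbove (R x.1.1) (V x.1.2) x.2 := by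
  obtain ⟨f, hf, hRf⟩ := hR
  let Witness := ((ℕ × ι) × ℕ) × ℕ × ℕ
  have hi : Computable fun x : Witness => x.1.1.1 :=
    Computable.fst.comp (Computable.fst.comp Computable.fst)
  have hτ : Computable fun x : Witness => x.1.1.2 :=
    Computable.snd.comp (Computable.fst.comp Computable.fst)
  have hn : Computable fun x : Witness => x.1.2 := Computable.snd.comp Computable.fst
  have hu : Computable fun x : Witness => x.2.1 := Computable.fst.comp Computable.snd
  have hv : Computable fun x : Witness => x.2.2 := Computable.snd.comp Computable.snd
  have hlt {a b : Witness → ℕ} (ha : Computable a) (hb : Computable b) :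
      REPred fun x => a x < b x :=
    (Computable.computablePred (Primrec.nat_lt.decide.to_comp.comp ha hb)).to_re
  have hsplit : REPred fun x : Witness => f x.1.1.1 x.2.1 ≠ f x.1.1.1 x.2.2 :=
    (Computable.computablePred (Primrec.eq.decide.to_comp.comp
      (hf.comp hi hu) (hf.comp hi hv))).not.to_re
  refine (rePred_exists (rePred_and (hV.comp (hτ.pair hu)) (rePred_and (hV.comp (hτ.pair hv))
    (rePred_and (hlt hn hu) (rePred_and (hlt hn hv) hsplit))))).of_eq fun x => ?_
  simp only [HomogeneousAbove, hRf, Prod.exists, ← Bool.eq_iff_iff]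
  push Not
  exact ⟨fun ⟨u, v, hu, hv, h⟩ => ⟨u, hu, v, hv, h⟩, fun ⟨u, hu, v, hv, h⟩ => ⟨u, v, hu, hv, h⟩⟩

theorem exists_computableSet_cohesive_of_dense {α : Type*} [Primcodable α] [Inhabited α]
    {V : List α → Set ℕ} {R : ℕ → Set ℕ} (hR : ComputableSeq R)
    (hV : REPred fun x : List α × ℕ => x.2 ∈ V x.1)
    (hanti : ∀ ⦃τ ρ⦄, τ <+: ρ → V ρ ⊆ V τ) (hinf : ∀ τ, (V τ).Infinite)
    (hdense : ∀ i τ, ∃ ρ n, τ <+: ρ ∧ HomogeneousAbove (R i) (V ρ) n) :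
    ∃ C, ComputableSet C ∧ Cohesive R C := by
  -- Padding lets the length of a string serve as its homogeneity threshold.
  have hdense_length : ∀ i τ, ∃ ρ, τ <+: ρ ∧ HomogeneousAbove (R i) (V ρ) ρ.length := by
    intro i τ
    obtain ⟨ρ, n, hτρ, hρ⟩ := hdense i τ
    have hpad : ρ <+: ρ ++ List.replicate n default := List.prefix_append _ _
    exact ⟨_, hτρ.trans hpad, hρ.mono (hanti hpad) (by simp)⟩
  obtain ⟨g, hg, hgood⟩ := exists_computable_eventually_prefix_of_dense
    (good := fun i τ => HomogeneousAbove (R i) (V τ) τ.length)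
    ((rePred_not_homogeneousAbove hV hR).comp
      (Computable.id.pair (Computable.list_length.comp Computable.snd))) hdense_length
  obtain ⟨Y, hY, hmono, hmem⟩ := exists_computable_strictMono_mem (V := fun s => V (g s))
    (hV.comp ((hg.comp Computable.fst).pair Computable.snd)) fun s => hinf (g s)
  refine ⟨Set.range Y, computableSet_range_of_strictMono hY hmono,
    cohesive_range hmono.injective fun i => ?_⟩
  obtain ⟨τ, hτ, hprefix⟩ := hgood i
  exact hτ.eventually_mem_or_eventually_notMem hmono.tendsto_atTop
    (hprefix.mono fun s hs => hanti hs (hmem s))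

end Cohesive

namespace TuringFunctional

variable {F : TuringFunctional} {τ ρ : BinStr}

/-- The numbers that some extension of `τ` puts into `dom Φ`, i.e. the possible elements of
`dom Φ(X)` for `X` extending `τ`. -/
def domAbove (F : TuringFunctional) (τ : BinStr) : Set ℕ :=
  {u | ∃ w, u ∈ F.domStr (τ ++ w)}

theorem domStr_mono (hτρ : τ <+: ρ) : F.domStr τ ⊆ F.domStr ρ := F.mono hτρ

theorem domStr_subset_domAbove (hτρ : τ <+: ρ) : F.domStr ρ ⊆ F.domAbove τ := by
  obtain ⟨w, rfl⟩ := hτρ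
  exact fun _ hu => ⟨w, hu⟩

theorem domAbove_anti (hτρ : τ <+: ρ) : F.domAbove ρ ⊆ F.domAbove τ := fun _ ⟨_, hu⟩ =>
  domStr_subset_domAbove (hτρ.trans (List.prefix_append _ _)) hu

theorem rePred_mem_domAbove (F : TuringFunctional) :
    REPred fun x : BinStr × ℕ => x.2 ∈ F.domAbove x.1 :=
  rePred_exists (F.partrec.dom_re.comp ((Computable.list_append.comp
    (Computable.fst.comp Computable.fst) Computable.snd).pair (Computable.snd.comp Computable.fst)))

theorem infinite_domAbove_of_notMem_D0 (hτ : τ ∉ D0 F) : (F.domAbove τ).Infinite := by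
  refine fun hfin => hτ ⟨hfin.toFinset.card + 1, fun ρ hτρ => ?_⟩
  calc (F.domStr ρ).encard ≤ (F.domAbove τ).encard :=
        Set.encard_le_encard (domStr_subset_domAbove hτρ)
    _ = hfin.toFinset.card := hfin.encard_eq_coe_toFinset_card
    _ < (hfin.toFinset.card + 1 : ℕ) := by exact_mod_cast Nat.lt_succ_self _

-- Once a string `ρ` itself puts some `u > x` into the domain, every later `v > x` shares a string
-- with `u`, so a failure to split on single strings already fixes the colour of all of
-- `F.domAbove ρ`.
theorem exists_homogeneousAbove_of_notMem_D1 {R : ℕ → Set ℕ} {n : ℕ}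
    (hinf : ∀ ρ, τ <+: ρ → (F.domAbove ρ).Infinite) (hτ : τ ∉ D1 R F n) :
    ∃ ρ x, τ <+: ρ ∧ HomogeneousAbove (R n) (F.domAbove ρ) x := by
  obtain ⟨ρ₀, hτρ₀, x, hunsplit⟩ : ∃ ρ₀, τ <+: ρ₀ ∧ ∃ x, ∀ ζ, ρ₀ <+: ζ → ∀ u v, x < u → x < v →
      u ∈ F.domStr ζ → v ∈ F.domStr ζ → (u ∈ R n ↔ v ∈ R n) := by
    by_contra! hsplit
    refine hτ fun ρ hρ x => ?_
    obtain ⟨ζ, hρζ, u, v, hxu, hxv, hu, hv, hne⟩ := hsplit ρ hρ x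
    exact ⟨ζ, hρζ, u, v, hxu, hxv, hu, hv, by tauto⟩
  obtain ⟨u₀, ⟨w, hu₀⟩, hxu₀⟩ := (hinf ρ₀ hτρ₀).exists_gt x
  have hcolour : ∀ u ∈ F.domAbove (ρ₀ ++ w), x < u → (u ∈ R n ↔ u₀ ∈ R n) := by
    rintro u ⟨w', hu⟩ hxu
    exact hunsplit _ ((List.prefix_append _ _).trans (List.prefix_append _ w')) u u₀ hxu hxu₀ hu
      (domStr_mono (List.prefix_append _ _) hu₀)
  exact ⟨ρ₀ ++ w, x, hτρ₀.trans (List.prefix_append _ _), fun u hu v hv hxu hxv =>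
    (hcolour u hu hxu).trans (hcolour v hv hxv).symm⟩

end TuringFunctional

/-- **Lemma 2.2 (density lemma).** If `R` is a computable sequence admitting no
computable `R`-cohesive set, then `D_{e,0} ∪ ⋃_n D_{e,1,n}` is dense. -/
theorem D0_union_D1_dense
    (R : ℕ → Set ℕ) (hR : ComputableSeq R)
    (hno : ¬ ∃ C : Set ℕ, ComputableSet C ∧ Cohesive R C)
    (F : TuringFunctional) :
    ∀ σ : BinStr, ∃ τ : BinStr, σ <+: τ ∧ τ ∈ D0 F ∪ ⋃ n : ℕ, D1 R F n := by
  intro σ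
  by_contra! havoid
  have hinf : ∀ τ, σ <+: τ → (F.domAbove τ).Infinite := fun τ hτ =>
    TuringFunctional.infinite_domAbove_of_notMem_D0 fun hD0 => havoid τ hτ (Or.inl hD0)
  have hre : REPred fun x : BinStr × ℕ => x.2 ∈ F.domAbove (σ ++ x.1) := F.rePred_mem_domAbove.comp
    ((Computable.list_append.comp (Computable.const σ) Computable.fst).pair Computable.snd)
  refine hno (exists_computableSet_cohesive_of_dense hR hre
    (fun τ ρ hτρ => TuringFunctional.domAbove_anti ((List.prefix_append_right_inj σ).2 hτρ))
    (fun τ => hinf _ (List.prefix_append σ τ)) fun i τ => ?_)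
  have hστ : σ <+: σ ++ τ := List.prefix_append σ τ
  obtain ⟨_, x, ⟨w, rfl⟩, hhom⟩ := TuringFunctional.exists_homogeneousAbove_of_notMem_D1 (n := i)
    (fun ρ hρ => hinf ρ (hστ.trans hρ))
    fun hD1 => havoid _ hστ (Or.inr (Set.mem_iUnion_of_mem i hD1))
  exact ⟨τ ++ w, x, List.prefix_append τ w, by rwa [← List.append_assoc]⟩
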